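/- For a ∈ ℤ, m ∈ ℕ with m ≥ 1, b ∈ ℝ, M > 0, and d := gcd(a, m), one has Σ_{0≤n<m} min(M, 1/|sin π((an+b)/m)|) ≤ d·min(M, 1/sin(π(d/m)‖b/d‖)) + d/sin(πd/(2m)) + (2m/π)·log(2m/(πd)), where ‖x‖ is the distance from x to the nearest integer and terms with sin = 0 are interpreted via the min with M. -/

import Mathlib

/-- Distance from `x` to the nearest integer. -/
noncomputable def nint (x : ℝ) : ℝ := |x - round x|

/-- `min(M, 1/|x|)`, interpreted as `M` when `x = 0`. -/
noncomputable def mclamp (M x : ℝ) : ℝ := if x = 0 then M else min M (1 / |x|)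

theorem mclamp_eq_of_abs (M x y : ℝ) (h : |x| = |y|) : mclamp M x = mclamp M y := by
  unfold mclamp
  rw [h]
  have : x = 0 ↔ y = 0 := by rw [← abs_eq_zero, h, abs_eq_zero]
  simp only [this]

theorem mclamp_le_inv (M x : ℝ) (h : 0 < x) : mclamp M x ≤ 1 / x := by
  unfold mclamp
  rw [if_neg h.ne', abs_of_pos h]
  exact min_le_right _ _

theorem abs_sin_add_int (x : ℝ) (t : ℤ) :
    |Real.sin (x + t * Real.pi)| = |Real.sin x| := by
  rw [Real.sin_add_int_mul_pi, abs_mul]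
  simp [abs_zpow]

/-- convexity of the cosecant -/
theorem csc_convex (u v s t : ℝ) (hu : 0 < u) (hu' : u < Real.pi) (hv : 0 < v)
    (hv' : v < Real.pi) (hs : 0 ≤ s) (ht : 0 ≤ t) (hst : s + t = 1) :
    1 / Real.sin (s * u + t * v) ≤ s * (1 / Real.sin u) + t * (1 / Real.sin v) := by
  have hU := Real.sin_pos_of_pos_of_lt_pi hu hu'
  have hV := Real.sin_pos_of_pos_of_lt_pi hv hv'
  have h1 := strictConcaveOn_sin_Icc.concaveOn.2 (x := u) ⟨hu.le, hu'.le⟩ (y := v)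
    ⟨hv.le, hv'.le⟩ hs ht hst
  simp only [smul_eq_mul] at h1
  have hpos : 0 < s * Real.sin u + t * Real.sin v := by
    rcases hs.eq_or_lt with h | h
    · have : t = 1 := by linarith
      subst h; subst this; simpa using hV
    · have := mul_pos h hU
      have := mul_nonneg ht hV.le
      linarith
  refine (one_div_le_one_div_of_le hpos h1).trans ?_
  rw [div_le_iff₀ hpos]
  have e : (s * (1 / Real.sin u) + t * (1 / Real.sin v)) * (s * Real.sin u + t * Real.sin v)
      = (s + t) ^ 2 + s * t * ((Real.sin u - Real.sin v) ^ 2 / (Real.sin u * Real.sin v)) := by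
    field_simp; ring
  rw [e, hst]
  have : 0 ≤ s * t * ((Real.sin u - Real.sin v) ^ 2 / (Real.sin u * Real.sin v)) := by positivity
  linarith

/-- midpoint (Hermite-Hadamard) bound for the cosecant -/
theorem csc_midpoint (S h : ℝ) (hS1 : S ≤ 1) (hh : 0 ≤ h)
    (hh2 : h ≤ Real.pi / 2) (hlt : Real.sin h < S) :
    2 * h / S ≤ Real.log (S + Real.sin h) - Real.log (S - Real.sin h) := by
  have hmono : ∀ y ∈ Set.Icc 0 h, 0 ≤ Real.sin y ∧ Real.sin y < S ∧ 0 ≤ Real.cos y := by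
    intro y hy
    refine ⟨Real.sin_nonneg_of_nonneg_of_le_pi hy.1 (by linarith [hy.2, Real.pi_pos]), ?_,
      Real.cos_nonneg_of_neg_pi_div_two_le_of_le (by linarith [hy.1, Real.pi_pos])
        (by linarith [hy.2])⟩
    exact (Real.sin_le_sin_of_le_of_le_pi_div_two (by linarith [hy.1, Real.pi_pos]) hh2
      hy.2).trans_lt hlt
  have hd : ∀ y ∈ Set.Icc 0 h, HasDerivAt
      (fun y => Real.log (S + Real.sin y) - Real.log (S - Real.sin y) - 2 * y / S)
      (Real.cos y / (S + Real.sin y) - (-Real.cos y) / (S - Real.sin y) - 2 * 1 / S) y := by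
    intro y hy
    obtain ⟨a1, a2, a3⟩ := hmono y hy
    have e1 := ((Real.hasDerivAt_sin y).const_add S).log (by linarith)
    have e2 := ((Real.hasDerivAt_sin y).const_sub S).log (by linarith)
    exact (e1.sub e2).sub (((hasDerivAt_id y).const_mul 2).div_const S)
  have hm : MonotoneOn
      (fun y => Real.log (S + Real.sin y) - Real.log (S - Real.sin y) - 2 * y / S)
      (Set.Icc 0 h) := by
    apply monotoneOn_of_deriv_nonneg (convex_Icc 0 h)
    · exact fun y hy => (hd y hy).continuousAt.continuousWithinAt
    · intro y hy
      exact (hd y (interior_subset hy)).differentiableAt.differentiableWithinAt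
    · intro y hy
      have hy := interior_subset hy
      rw [(hd y hy).deriv]
      obtain ⟨a1, a2, a3⟩ := hmono y hy
      have hSp : 0 < S := by linarith
      have p1 : 0 < S + Real.sin y := by linarith
      have p2 : 0 < S - Real.sin y := by linarith
      have e : Real.cos y / (S + Real.sin y) - (-Real.cos y) / (S - Real.sin y) - 2 * 1 / S
        = 2 * (Real.cos y * S ^ 2 - (S ^ 2 - Real.sin y ^ 2)) /
          ((S + Real.sin y) * (S - Real.sin y) * S) := by
        field_simp; ring
      rw [e]
      apply div_nonneg _ (by positivity)
      have c1 := Real.cos_le_one y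
      have e3 := Real.sin_sq_add_cos_sq y
      have : S ^ 2 ≤ 1 := by nlinarith
      nlinarith [mul_nonneg (sub_nonneg.2 c1) (sub_nonneg.2 this),
        mul_nonneg (sub_nonneg.2 c1) a3]
  have := hm (Set.left_mem_Icc.2 hh) (Set.right_mem_Icc.2 hh) hh
  simp at this
  linarith

/-- the midpoint bound in terms of `log tan` -/
theorem csc_le_log_tan (x h : ℝ) (hh : 0 < h) (h1 : 0 < x - h) (h2 : x + h < Real.pi) :
    2 * h * (1 / Real.sin x) ≤
      Real.log (Real.tan ((x + h) / 2)) - Real.log (Real.tan ((x - h) / 2)) := by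
  set A := (x + h) / 2 with hA
  set B := (x - h) / 2 with hB
  have ex : x = A + B := by rw [hA, hB]; ring
  have eh : h = A - B := by rw [hA, hB]; ring
  have sA : 0 < Real.sin A := Real.sin_pos_of_pos_of_lt_pi (by linarith) (by linarith)
  have sB : 0 < Real.sin B := Real.sin_pos_of_pos_of_lt_pi (by linarith) (by linarith)
  have cA : 0 < Real.cos A := Real.cos_pos_of_mem_Ioo ⟨by linarith, by linarith⟩
  have cB : 0 < Real.cos B := Real.cos_pos_of_mem_Ioo ⟨by linarith, by linarith⟩
  have i1 : Real.sin x + Real.sin h = 2 * (Real.sin A * Real.cos B) := by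
    rw [ex, eh, Real.sin_add, Real.sin_sub]; ring
  have i2 : Real.sin x - Real.sin h = 2 * (Real.cos A * Real.sin B) := by
    rw [ex, eh, Real.sin_add, Real.sin_sub]; ring
  have key := csc_midpoint (Real.sin x) h (Real.sin_le_one x) hh.le (by linarith)
    (by have := mul_pos cA sB; linarith)
  rw [i1, i2, Real.log_mul two_ne_zero (mul_pos sA cB).ne',
    Real.log_mul two_ne_zero (mul_pos cA sB).ne',
    Real.log_mul sA.ne' cB.ne', Real.log_mul cA.ne' sB.ne'] at key
  rw [Real.tan_eq_sin_div_cos, Real.tan_eq_sin_div_cos, Real.log_div sA.ne' cA.ne',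
    Real.log_div sB.ne' cB.ne', mul_one_div]
  linarith

/-- cosecant sum at the half-integers -/
theorem half_sum (q : ℕ) (hq : 2 ≤ q) :
    ∑ k ∈ Finset.range (q - 2), 1 / Real.sin (Real.pi * (((k : ℝ) + 1 + 1 / 2) / q)) ≤
      (2 * q / Real.pi) * Real.log (2 * q / Real.pi) := by
  have hq0 : (0 : ℝ) < q := by positivity
  have hq2 : (2 : ℝ) ≤ q := by exact_mod_cast hq
  have hpi := Real.pi_pos
  set L : ℕ → ℝ := fun k => Real.log (Real.tan (Real.pi * ((k : ℝ) + 1) / (2 * q))) with hL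
  have step : ∀ k ∈ Finset.range (q - 2),
      1 / Real.sin (Real.pi * (((k : ℝ) + 1 + 1 / 2) / q)) ≤ (q / Real.pi) * (L (k + 1) - L k) := by
    intro k hk
    have hk : k + 2 < q := by have := Finset.mem_range.1 hk; omega
    have hk' : (k : ℝ) + 2 < q := by exact_mod_cast hk
    have := csc_le_log_tan (Real.pi * (((k : ℝ) + 1 + 1 / 2) / q)) (Real.pi / (2 * q))
      (by positivity)
      (by
        have : Real.pi * (((k : ℝ) + 1 + 1 / 2) / q) - Real.pi / (2 * q)
          = Real.pi * (k + 1) / q := by field_simp; ring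
        rw [this]; positivity)
      (by
        have : Real.pi * (((k : ℝ) + 1 + 1 / 2) / q) + Real.pi / (2 * q)
          = Real.pi * (k + 2) / q := by field_simp; ring
        rw [this, div_lt_iff₀ hq0]; exact mul_lt_mul_of_pos_left hk' hpi)
    have e1 : (Real.pi * (((k : ℝ) + 1 + 1 / 2) / q) + Real.pi / (2 * q)) / 2
        = Real.pi * (((k + 1 : ℕ) : ℝ) + 1) / (2 * q) := by push_cast; field_simp; ring
    have e2 : (Real.pi * (((k : ℝ) + 1 + 1 / 2) / q) - Real.pi / (2 * q)) / 2
        = Real.pi * ((k : ℝ) + 1) / (2 * q) := by field_simp; ring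
    rw [e1, e2] at this
    have h3 := mul_le_mul_of_nonneg_left this (show 0 ≤ q / Real.pi by positivity)
    refine le_trans (le_of_eq ?_) h3
    field_simp
  refine (Finset.sum_le_sum step).trans ?_
  rw [← Finset.mul_sum, Finset.sum_range_sub]
  have y0 : 0 < Real.pi / (2 * q) := by positivity
  have y1 : Real.pi / (2 * q) < Real.pi / 2 := by
    apply div_lt_div_of_pos_left hpi (by norm_num); linarith
  have t0 := Real.lt_tan y0 y1
  have E0 : L 0 = Real.log (Real.tan (Real.pi / (2 * q))) := by simp [hL]
  have E1 : L (q - 2) = - Real.log (Real.tan (Real.pi / (2 * q))) := by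
    simp only [hL]
    rw [← Real.log_inv, ← Real.tan_pi_div_two_sub]
    congr 2
    rw [Nat.cast_sub hq]
    push_cast
    field_simp; ring
  have l0 := Real.log_le_log y0 t0.le
  have l1 : Real.log (2 * q / Real.pi) = - Real.log (Real.pi / (2 * q)) := by
    rw [← Real.log_inv, inv_div]
  rw [E0, E1, l1]
  have : (2 * q / Real.pi) * -Real.log (Real.pi / (2 * q)) =
    (q / Real.pi) * (-2 * Real.log (Real.pi / (2 * q))) := by ring
  rw [this]
  exact mul_le_mul_of_nonneg_left (by linarith) (by positivity)

theorem core_sum (q : ℕ) (hq : 2 ≤ q) (θ : ℝ) (h1 : -(1 / 2) ≤ θ) (h2 : θ ≤ 1 / 2) :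
    ∑ k ∈ Finset.range (q - 1), 1 / Real.sin (Real.pi * (((k : ℝ) + 1 + θ) / q)) ≤
      1 / Real.sin (Real.pi / (2 * q)) + (2 * q / Real.pi) * Real.log (2 * q / Real.pi) := by
  have hq0 : (0 : ℝ) < q := by positivity
  have hpi := Real.pi_pos
  set F : ℕ → ℝ := fun k => 1 / Real.sin (Real.pi * (((k : ℝ) + 1 / 2) / q)) with hF
  have step : ∀ k ∈ Finset.range (q - 1),
      1 / Real.sin (Real.pi * (((k : ℝ) + 1 + θ) / q)) ≤
        (1 / 2 - θ) * F k + (1 / 2 + θ) * F (k + 1) := by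
    intro k hk
    have hk : k + 2 ≤ q := by have := Finset.mem_range.1 hk; omega
    have hk' : (k : ℝ) + 2 ≤ q := by exact_mod_cast hk
    have := csc_convex (Real.pi * (((k : ℝ) + 1 / 2) / q))
      (Real.pi * ((((k + 1 : ℕ) : ℝ) + 1 / 2) / q)) (1 / 2 - θ) (1 / 2 + θ)
      (by positivity)
      (by
        rw [← mul_div_assoc, div_lt_iff₀ hq0]; exact mul_lt_mul_of_pos_left (by linarith) hpi)
      (by positivity)
      (by
        rw [← mul_div_assoc, div_lt_iff₀ hq0]
        exact mul_lt_mul_of_pos_left (by push_cast; linarith) hpi)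
      (by linarith) (by linarith) (by ring)
    refine le_trans (le_of_eq ?_) this
    congr 2
    push_cast
    field_simp; ring
  refine (Finset.sum_le_sum step).trans ?_
  rw [Finset.sum_add_distrib, ← Finset.mul_sum, ← Finset.mul_sum]
  have hs : ∑ k ∈ Finset.range (q - 1), F (k + 1) - ∑ k ∈ Finset.range (q - 1), F k
      = F (q - 1) - F 0 := by
    rw [← Finset.sum_sub_distrib, Finset.sum_range_sub]
  have f0 : F 0 = 1 / Real.sin (Real.pi / (2 * q)) := by
    simp only [hF]; congr 2; push_cast; field_simp; ring
  have f1 : F (q - 1) = 1 / Real.sin (Real.pi / (2 * q)) := by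
    simp only [hF]; rw [← Real.sin_pi_sub (Real.pi / (2 * q))]
    congr 2; rw [Nat.cast_sub (by omega)]; push_cast; field_simp; ring
  have hs2 : ∑ k ∈ Finset.range (q - 1), F (k + 1)
      = ∑ k ∈ Finset.range (q - 2), F (k + 1) + F (q - 1) := by
    obtain ⟨r, rfl⟩ : ∃ r, q = r + 2 := ⟨q - 2, by omega⟩
    simp only [Nat.add_sub_cancel, show r + 2 - 1 = r + 1 from rfl]
    rw [Finset.sum_range_succ]
  have hh := half_sum q hq
  have hh2 : ∑ k ∈ Finset.range (q - 2), F (k + 1) ≤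
      (2 * q / Real.pi) * Real.log (2 * q / Real.pi) := by
    refine le_trans (le_of_eq ?_) hh
    apply Finset.sum_congr rfl
    intro k _
    simp only [hF]; push_cast; rfl
  have : ∑ k ∈ Finset.range (q - 1), F k = ∑ k ∈ Finset.range (q - 1), F (k + 1) := by linarith
  rw [this, hs2, f1]
  linarith

theorem full_sum (q : ℕ) (hq : 1 ≤ q) (θ M : ℝ) (h1 : -(1 / 2) ≤ θ) (h2 : θ ≤ 1 / 2) :
    ∑ k ∈ Finset.range q, mclamp M (Real.sin (Real.pi * (((k : ℝ) + θ) / q))) ≤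
      mclamp M (Real.sin (Real.pi * (θ / q))) +
      (1 / Real.sin (Real.pi / (2 * q)) + (2 * q / Real.pi) * Real.log (2 * q / Real.pi)) := by
  have hpi := Real.pi_pos
  have hq0 : (0 : ℝ) < q := by positivity
  obtain ⟨r, rfl⟩ : ∃ r, q = r + 1 := ⟨q - 1, by omega⟩
  rw [Finset.sum_range_succ', add_comm]
  have e0 : ((0 : ℕ) : ℝ) + θ = θ := by simp
  rw [e0]
  gcongr
  rcases Nat.eq_zero_or_pos r with rfl | hr
  · simp
    have l := Real.one_sub_inv_le_log_of_pos (show 0 < 2 / Real.pi by positivity)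
    rw [inv_div] at l
    have := mul_le_mul_of_nonneg_left l (show 0 ≤ 2 / Real.pi by positivity)
    have e : 2 / Real.pi * (1 - Real.pi / 2) = 2 / Real.pi - 1 := by field_simp
    have : 0 < 2 / Real.pi := by positivity
    linarith
  · refine le_trans ?_ (core_sum (r + 1) (by omega) θ h1 h2)
    apply Finset.sum_le_sum
    intro k hk
    have hk : k + 1 ≤ r := by have := Finset.mem_range.1 hk; omega
    have hk' : (k : ℝ) + 1 ≤ r := by exact_mod_cast hk
    have e : (((k + 1 : ℕ) : ℝ) + θ) = (k : ℝ) + 1 + θ := by push_cast; rfl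
    rw [e]
    apply mclamp_le_inv
    apply Real.sin_pos_of_pos_of_lt_pi
    · have : 0 < (k : ℝ) + 1 + θ := by have := Nat.cast_nonneg (α := ℝ) k; linarith
      positivity
    · rw [← mul_div_assoc, div_lt_iff₀ hq0]
      exact mul_lt_mul_of_pos_left (by push_cast; linarith) hpi

theorem periodic_sum_mul (f : ℕ → ℝ) (q : ℕ) (hf : ∀ k, f (k + q) = f k) (d : ℕ) :
    ∑ n ∈ Finset.range (d * q), f n = d * ∑ n ∈ Finset.range q, f n := by
  induction d with
  | zero => simp
  | succ d ih =>
    have hf' : ∀ k, f (d * q + k) = f k := by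
      clear ih
      induction d with
      | zero => simp
      | succ d ih =>
        intro k
        rw [← ih k, ← hf (d * q + k)]; congr 1; ring
    rw [Nat.succ_mul, Finset.sum_range_add, ih]
    simp only [hf']
    push_cast; ring

theorem perm_sum (H : ℤ → ℝ) (q : ℕ) (hq : 1 ≤ q) (hH : ∀ j t : ℤ, H (j + q * t) = H j)
    (a r : ℤ) (hc : IsCoprime a (q : ℤ)) :
    ∑ n ∈ Finset.range q, H (a * n + r) = ∑ n ∈ Finset.range q, H n := by
  have hq0 : (0 : ℤ) < q := by exact_mod_cast hq
  have hnn : ∀ n : ℕ, 0 ≤ (a * n + r) % (q : ℤ) := fun n => Int.emod_nonneg _ hq0.ne'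
  have hmaps : ∀ n ∈ Finset.range q, ((a * (n : ℤ) + r) % q).toNat ∈ Finset.range q := by
    intro n _
    have := Int.emod_lt_of_pos (a * n + r) hq0
    have := hnn n
    rw [Finset.mem_range]; omega
  have hinj : Set.InjOn (fun n : ℕ => ((a * (n : ℤ) + r) % q).toNat) (Finset.range q) := by
    intro x hx y hy hxy
    simp only at hxy
    have h3 : (a * (x : ℤ) + r) % q = (a * (y : ℤ) + r) % q := by
      have := hnn x; have := hnn y; omega
    have h4 := Int.emod_emod_of_dvd
    have h5 : (q : ℤ) ∣ a * ((x : ℤ) - y) := by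
      have := Int.sub_emod_right
      have h6 := (Int.emod_emod_of_dvd (a * (x : ℤ) + r) (dvd_refl (q : ℤ)))
      have := Int.dvd_of_emod_eq_zero (Int.emod_eq_emod_iff_emod_sub_eq_zero.1 h3)
      convert this using 1; ring
    have h7 : (q : ℤ) ∣ (x : ℤ) - y := hc.symm.dvd_of_dvd_mul_left h5
    have hx : x < q := by simpa using hx
    have hy : y < q := by simpa using hy
    have : (x : ℤ) - y = 0 := Int.eq_zero_of_abs_lt_dvd h7 (by rw [abs_lt]; omega)
    omega
  refine Finset.sum_nbij (fun n : ℕ => ((a * (n : ℤ) + r) % q).toNat) hmaps hinj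
    (Finset.surjOn_of_injOn_of_card_le _ hmaps hinj le_rfl) ?_
  intro n _
  rw [Int.toNat_of_nonneg (hnn n)]
  conv_lhs => rw [← Int.emod_add_mul_ediv (a * n + r) q]
  exact hH _ _

theorem sin_sum (a : ℤ) (m : ℕ) (hm : 1 ≤ m) (b M : ℝ) (hM : 0 < M) :
    ∑ n ∈ Finset.range m, mclamp M (Real.sin (Real.pi * (((a : ℝ) * n + b) / m))) ≤
      (Int.gcd a m : ℝ) *
          mclamp M (Real.sin (Real.pi * ((Int.gcd a m : ℝ) / m) * nint (b / (Int.gcd a m : ℝ)))) +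
        (Int.gcd a m : ℝ) / Real.sin (Real.pi * (Int.gcd a m : ℝ) / (2 * m)) +
        (2 * m / Real.pi) * Real.log (2 * m / (Real.pi * (Int.gcd a m : ℝ))) := by
  have hpi := Real.pi_pos
  have hdpos : 0 < Int.gcd a m := Int.gcd_pos_of_ne_zero_right _ (by omega)
  obtain ⟨a', ha'⟩ : ((Int.gcd a m : ℕ) : ℤ) ∣ a := Int.gcd_dvd_left ..
  obtain ⟨q, hq⟩ : (Int.gcd a m) ∣ m := by
    have : ((Int.gcd a m : ℕ) : ℤ) ∣ m := Int.gcd_dvd_right ..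
    exact_mod_cast this
  have hc : IsCoprime a' (q : ℤ) := by
    rw [Int.isCoprime_iff_gcd_eq_one]
    have h := Int.gcd_mul_left ((Int.gcd a m : ℕ) : ℤ) a' q
    rw [← ha', ← Nat.cast_mul, ← hq] at h
    simp only [Int.natAbs_natCast] at h
    exact (Nat.eq_of_mul_eq_mul_left hdpos (by rw [mul_one]; exact h)).symm
  generalize Int.gcd a m = d at *
  subst ha'
  subst hq
  have hq1 : 1 ≤ q := by
    rcases Nat.eq_zero_or_pos q with rfl | h
    · simp at hm
    · exact h
  have hq0 : (0 : ℝ) < q := by exact_mod_cast hq1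
  have hd0 : (0 : ℝ) < d := by exact_mod_cast hdpos
  set r := round (b / d) with hr
  set θ := b / d - r with hθ
  set H : ℤ → ℝ := fun j => mclamp M (Real.sin (Real.pi * (((j : ℝ) + θ) / q))) with hHdef
  have hH : ∀ j t : ℤ, H (j + q * t) = H j := by
    intro j t
    simp only [hHdef]
    apply mclamp_eq_of_abs
    rw [← abs_sin_add_int (Real.pi * (((j : ℝ) + θ) / q)) t]
    congr 2
    push_cast
    field_simp
    ring
  have hsum : ∑ n ∈ Finset.range (d * q),
      mclamp M (Real.sin (Real.pi * ((((d * a' : ℤ) : ℝ) * n + b) / (d * q : ℕ))))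
      = ∑ n ∈ Finset.range (d * q), H (a' * n + r) := by
    apply Finset.sum_congr rfl
    intro n _
    simp only [hHdef]
    congr 3
    push_cast
    rw [hθ]
    field_simp
    ring
  rw [hsum, periodic_sum_mul (fun n : ℕ => H (a' * n + r)) q, perm_sum H q hq1 hH a' r hc]
  · have hab := abs_le.1 (abs_sub_round (b / d))
    have key := mul_le_mul_of_nonneg_left
      (full_sum q hq1 θ M (by linarith [hab.1]) (by linarith [hab.2])) hd0.le
    have e0 : mclamp M (Real.sin (Real.pi * ((d : ℝ) / (d * q : ℕ)) * nint (b / d)))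
        = mclamp M (Real.sin (Real.pi * (θ / q))) := by
      apply mclamp_eq_of_abs
      have : nint (b / d) = |θ| := rfl
      rw [this]
      have e : Real.pi * ((d : ℝ) / (d * q : ℕ)) * |θ| = Real.pi * (|θ| / q) := by
        push_cast; field_simp
      rw [e]
      rcases abs_choice θ with h | h
      · rw [h]
      · rw [h, neg_div, mul_neg, Real.sin_neg, abs_neg]
    have e1 : Real.pi * (d : ℝ) / (2 * (d * q : ℕ)) = Real.pi / (2 * q) := by
      push_cast; field_simp
    have e2 : 2 * ((d * q : ℕ) : ℝ) / (Real.pi * d) = 2 * q / Real.pi := by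
      push_cast; field_simp
    rw [e0, e1, e2]
    have e3 : ∑ n ∈ Finset.range q, H n = ∑ k ∈ Finset.range q,
        mclamp M (Real.sin (Real.pi * (((k : ℝ) + θ) / q))) := by
      apply Finset.sum_congr rfl
      intro n _
      simp [hHdef]
    rw [e3]
    refine key.trans (le_of_eq ?_)
    push_cast
    ring
  · intro k
    rw [← hH (a' * k + r) a']
    congr 1
    push_cast
    ring
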